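/- Let p be a prime, q = 1/p, let k ≥ 0 be an integer, and let x be a real number with |x| < 1. Then ∑_{μ=1}^∞ P(2k, p^μ)·x^μ = ((1−q^{2k+1}·x)/(1−q^{2k+1})) · ∑_{μ=1}^∞ P(2k+1, p^μ)·x^μ. -/

import Mathlib

/-- Number of symmetric `n × n` matrices over `ZMod m` with nonzero determinant. -/
noncomputable def Nsym (n m : ℕ) : ℕ :=
  Nat.card {A : Matrix (Fin n) (Fin n) (ZMod m) // A.IsSymm ∧ A.det ≠ 0}

/-- Proportion of symmetric `n × n` matrices over `ZMod m` with nonzero determinant. -/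
noncomputable def Psym (n m : ℕ) : ℝ :=
  (Nsym n m : ℝ) / (m : ℝ) ^ (n * (n + 1) / 2)

/-!
Condition on the first row of a symmetric matrix over a finite local ring. If its corner is a unit,
or if its corner is not a unit but another of its entries is, then a Schur complement removes a
`1 × 1` or a `2 × 2` unimodular block; otherwise the whole row lies in the maximal ideal. The
resulting recursion is the one satisfied by MacWilliams' proportions `c(m, r)` of symmetric
`m × m` matrices of corank `r` over the residue field. Over `ZMod (p ^ μ)` a symmetric `r × r`
matrix with entries in the maximal ideal is `p` times a matrix that only matters modulo
`p ^ (μ - r)`, so `P(m, p ^ μ) = ∑ r, c(m, r) P(r, p ^ (μ - r))`, and the generating functions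
satisfy `f m = ∑ r, c(m, r) x ^ r f r`.

The parity-dependent relations between neighbouring values of `c` turn this into a homogeneous
triangular linear system for the defects
`e k = f (2k) - (1 - q ^ (2k + 1) x) f (2k + 1) / (1 - q ^ (2k + 1))`.
Its diagonal coefficients `1 - (q ^ (k + 1) x) ^ (2k + 1)` do not vanish, so all `e k` are zero.
-/

open Finset
open scoped BigOperators

section CorankDistribution

variable {K : Type*} [Field K] {q : K}

lemma one_sub_pow_succ_ne_zero (hq : ¬IsOfFinOrder q) (n : ℕ) : 1 - q ^ (n + 1) ≠ 0 :=
  fun h ↦ hq (isOfFinOrder_iff_pow_eq_one.2 ⟨n + 1, n.succ_pos, (sub_eq_zero.1 h).symm⟩)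

/-- The `q`-Pochhammer symbol `(q; q)ₙ = (1 - q) (1 - q²) ⋯ (1 - qⁿ)`. -/
def qPoch (q : K) (n : ℕ) : K :=
  ∏ i ∈ range n, (1 - q ^ (i + 1))

lemma qPoch_zero (q : K) : qPoch q 0 = 1 :=
  prod_range_zero _

lemma qPoch_succ (q : K) (n : ℕ) : qPoch q (n + 1) = qPoch q n * (1 - q ^ (n + 1)) :=
  prod_range_succ _ n

lemma qPoch_ne_zero (hq : ¬IsOfFinOrder q) (n : ℕ) : qPoch q n ≠ 0 :=
  prod_ne_zero_iff.2 fun i _ ↦ one_sub_pow_succ_ne_zero hq i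

lemma not_isOfFinOrder_sq (hq : ¬IsOfFinOrder q) : ¬IsOfFinOrder (q ^ 2) := by
  simpa only [isOfFinOrder_pow, OfNat.ofNat_ne_zero, or_false] using hq

/-- MacWilliams' formula for the proportion of symmetric `m × m` matrices over a finite field with
`1 / q` elements that have corank `r`, as a function of an arbitrary parameter `q`. -/
def corankProb (q : K) (m r : ℕ) : K :=
  if r ≤ m then
    q ^ (r + 1).choose 2 * qPoch q m / (qPoch q r * qPoch (q ^ 2) ((m - r) / 2))
  else 0

lemma corankProb_add (q : K) (r d : ℕ) :
    corankProb q (r + d) r =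
      q ^ (r + 1).choose 2 * qPoch q (r + d) / (qPoch q r * qPoch (q ^ 2) (d / 2)) := by
  rw [corankProb, if_pos (Nat.le_add_right r d), Nat.add_sub_cancel_left]

lemma corankProb_of_lt {m r : ℕ} (h : m < r) : corankProb q m r = 0 :=
  if_neg h.not_ge

lemma corankProb_self (hq : ¬IsOfFinOrder q) (m : ℕ) :
    corankProb q m m = q ^ (m + 1).choose 2 := by
  rw [corankProb, if_pos le_rfl, Nat.sub_self, Nat.zero_div, qPoch_zero, mul_one,
    mul_div_cancel_right₀ _ (qPoch_ne_zero hq m)]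

lemma corankProb_succ_succ (hq : ¬IsOfFinOrder q) (m r : ℕ) :
    corankProb q (m + 1) (r + 1) * (1 - q ^ (r + 1)) =
      q ^ (r + 1) * (1 - q ^ (m + 1)) * corankProb q m r := by
  obtain hmr | hrm := lt_or_ge m r
  · rw [corankProb_of_lt hmr, corankProb_of_lt (Nat.succ_lt_succ hmr), zero_mul, mul_zero]
  obtain ⟨d, rfl⟩ := Nat.exists_eq_add_of_le hrm
  have hr := one_sub_pow_succ_ne_zero hq r
  have hPr := qPoch_ne_zero hq r
  have hPd := qPoch_ne_zero (not_isOfFinOrder_sq hq) (d / 2)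
  rw [Nat.add_right_comm r d 1, corankProb_add, corankProb_add, Nat.add_right_comm r 1 d,
    qPoch_succ, qPoch_succ, Nat.choose_succ_succ' (r + 1) 1, Nat.choose_one_right, pow_add]
  field_simp

lemma corankProb_succ_of_even (q : K) (r d : ℕ) :
    corankProb q (r + 2 * d + 1) r =
      (1 - q ^ (r + 2 * d + 1)) * corankProb q (r + 2 * d) r := by
  rw [add_assoc, corankProb_add, corankProb_add, ← add_assoc, qPoch_succ,
    show (2 * d + 1) / 2 = 2 * d / 2 by omega]
  ring

lemma corankProb_succ_of_odd (hq : ¬IsOfFinOrder q) (r d : ℕ) :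
    corankProb q (r + 2 * d + 2) r * (1 - q ^ (2 * d + 2)) =
      (1 - q ^ (r + 2 * d + 2)) * corankProb q (r + 2 * d + 1) r := by
  have hq2 := not_isOfFinOrder_sq hq
  have hd := one_sub_pow_succ_ne_zero hq2 d
  have hPr := qPoch_ne_zero hq r
  have hPd := qPoch_ne_zero hq2 d
  rw [add_assoc r, corankProb_add, add_assoc r, corankProb_add,
    show (2 * d + 2) / 2 = d + 1 by omega, show (2 * d + 1) / 2 = d by omega,
    show r + (2 * d + 2) = r + (2 * d + 1) + 1 by ring, qPoch_succ, qPoch_succ,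
    show q ^ (2 * d + 2) = (q ^ 2) ^ (d + 1) by ring]
  field_simp

lemma corankProb_succ_right_of_even (hq : ¬IsOfFinOrder q) (r d : ℕ) :
    corankProb q (r + 2 * d) (r + 1) * (1 - q ^ (r + 1)) =
      q ^ (r + 1) * (1 - q ^ (2 * d)) * corankProb q (r + 2 * d) r := by
  obtain _ | d := d
  · rw [corankProb_of_lt (by omega), mul_zero, pow_zero, sub_self, mul_zero, zero_mul, zero_mul]
  · rw [show r + 2 * (d + 1) = r + 2 * d + 1 + 1 by ring, corankProb_succ_succ hq]
    linear_combination -q ^ (r + 1) * corankProb_succ_of_odd hq r d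

lemma corankProb_rank_recursion (hq : ¬IsOfFinOrder q) (r d : ℕ) :
    (1 - q ^ (d + 1)) * corankProb q (r + d + 1) r =
      (1 - q ^ (r + d + 1)) * ((1 - q) * corankProb q (r + d) r +
        q * (1 - q ^ (r + d)) * corankProb q (r + d - 1) r) := by
  obtain ⟨e, rfl | rfl⟩ := d.even_or_odd'
  · have hpred : (1 - q ^ (r + 2 * e)) * corankProb q (r + 2 * e - 1) r =
        (1 - q ^ (2 * e)) * corankProb q (r + 2 * e) r := by
      obtain _ | e := e
      · obtain _ | r := r
        · simp only [mul_zero, add_zero, pow_zero, sub_self, zero_mul]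
        · rw [corankProb_of_lt (by omega), mul_zero, mul_zero, pow_zero, sub_self, zero_mul]
      · rw [show r + 2 * (e + 1) - 1 = r + 2 * e + 1 by omega]
        linear_combination -corankProb_succ_of_odd hq r e
    linear_combination (1 - q ^ (2 * e + 1)) * corankProb_succ_of_even q r e -
      (1 - q ^ (r + 2 * e + 1)) * q * hpred
  · have hpred := corankProb_succ_of_even q r e
    have hodd := corankProb_succ_of_odd hq r e
    rw [show r + (2 * e + 1) - 1 = r + 2 * e by omega]
    simp only [← add_assoc] at hpred hodd ⊢
    linear_combination hodd + (1 - q ^ (r + 2 * e + 1 + 1)) * q * hpred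

lemma corankProb_succ_zero (hq : ¬IsOfFinOrder q) (m : ℕ) :
    corankProb q (m + 1) 0 =
      (1 - q) * corankProb q m 0 + q * (1 - q ^ m) * corankProb q (m - 1) 0 := by
  have h := corankProb_rank_recursion hq 0 m
  rw [zero_add] at h
  exact mul_left_cancel₀ (one_sub_pow_succ_ne_zero hq m) h

lemma corankProb_succ_succ_eq (hq : ¬IsOfFinOrder q) (m r : ℕ) :
    corankProb q (m + 1) (r + 1) =
      (1 - q) * corankProb q m (r + 1) + q * (1 - q ^ m) * corankProb q (m - 1) (r + 1) +
        q ^ (m + 1) * corankProb q m r := by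
  have hstep := corankProb_succ_succ hq m r
  apply mul_left_cancel₀ (one_sub_pow_succ_ne_zero hq m)
  obtain hrm | hmr := lt_or_ge r m
  · obtain ⟨d, rfl⟩ := Nat.exists_eq_add_of_le (show r + 1 ≤ m from hrm)
    linear_combination corankProb_rank_recursion hq (r + 1) d + q ^ (d + 1) * hstep
  · rw [corankProb_of_lt (m := m) (by omega), corankProb_of_lt (m := m - 1) (by omega)]
    obtain rfl | hmr := hmr.eq_or_lt
    · linear_combination hstep
    · rw [corankProb_of_lt (by omega), corankProb_of_lt hmr]
      ring

theorem eq_sum_corankProb_mul_of_recursion (hq : ¬IsOfFinOrder q) {D : ℕ → ℕ → K}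
    (hD : ∀ j m, D j (m + 1) =
      (1 - q) * D j m + q * (1 - q ^ m) * D j (m - 1) + q ^ (m + 1) * D (j + 1) m) (j m : ℕ) :
    D j m = ∑ r ∈ range (m + 1), corankProb q m r * D (j + r) 0 := by
  induction m using Nat.strong_induction_on generalizing j with
  | _ m ih =>
    have extend {n N : ℕ} (hn : n < N) (hD' : ∀ j, D j n =
        ∑ r ∈ range (n + 1), corankProb q n r * D (j + r) 0) (j : ℕ) :
        D j n = ∑ r ∈ range N, corankProb q n r * D (j + r) 0 := by
      rw [hD' j]
      refine sum_subset (range_subset_range.2 hn) fun r _ hr ↦ ?_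
      rw [corankProb_of_lt (by simpa using hr), zero_mul]
    obtain _ | m := m
    · rw [sum_range_one, corankProb_self hq, add_zero, Nat.choose_eq_zero_of_lt (by omega),
        pow_zero, one_mul]
    have ihm := ih m m.lt_succ_self
    rw [hD, extend (N := m + 2) (by omega) ihm j,
      extend (N := m + 2) (by omega) (fun j ↦ ih (m - 1) (by omega) j) j, ihm (j + 1),
      sum_range_succ' _ (m + 1), sum_range_succ' _ (m + 1), sum_range_succ' _ (m + 1),
      corankProb_succ_zero hq]
    simp only [corankProb_succ_succ_eq hq, add_mul, sum_add_distrib, mul_add, mul_sum, mul_assoc,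
      ← add_assoc, add_right_comm j 1]
    ring

lemma sum_range_two_mul {M : Type*} [AddCommMonoid M] (g : ℕ → M) (n : ℕ) :
    ∑ i ∈ range (2 * n), g i = ∑ i ∈ range n, (g (2 * i) + g (2 * i + 1)) := by
  induction n with
  | zero => rfl
  | succ n ih => rw [Nat.mul_succ, sum_range_succ, sum_range_succ, sum_range_succ, ih, add_assoc]

section CorankExpansion

variable {x : K} {f : ℕ → K}

lemma even_eq_sum_corankProb (hq : ¬IsOfFinOrder q)
    (hf : ∀ m, f m = ∑ r ∈ range (m + 1), corankProb q m r * x ^ r * f r) (k : ℕ) :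
    f (2 * k) = ∑ b ∈ range (k + 1), corankProb q (2 * k) (2 * b) * x ^ (2 * b) *
      (f (2 * b) + (q ^ (2 * b + 1) - q ^ (2 * k + 1)) * x *
        (f (2 * b + 1) / (1 - q ^ (2 * b + 1)))) := by
  have hlast : corankProb q (2 * k) (2 * k + 1) * x ^ (2 * k + 1) * f (2 * k + 1) = 0 := by
    rw [corankProb_of_lt (by omega), zero_mul, zero_mul]
  rw [hf (2 * k), ← add_zero (∑ r ∈ _, _), ← hlast, ← sum_range_succ,
    show 2 * k + 1 + 1 = 2 * (k + 1) by ring, sum_range_two_mul]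
  refine sum_congr rfl fun b hb ↦ ?_
  obtain ⟨d, rfl⟩ := Nat.exists_eq_add_of_le (Nat.lt_succ_iff.1 (mem_range.1 hb))
  have hc := corankProb_succ_right_of_even hq (2 * b) d
  have hb := one_sub_pow_succ_ne_zero hq (2 * b)
  rw [← mul_add] at hc
  rw [eq_div_of_mul_eq hb hc]
  field_simp
  ring

lemma odd_div_eq_sum_corankProb (hq : ¬IsOfFinOrder q)
    (hf : ∀ m, f m = ∑ r ∈ range (m + 1), corankProb q m r * x ^ r * f r) (k : ℕ) :
    f (2 * k + 1) / (1 - q ^ (2 * k + 1)) =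
      ∑ b ∈ range (k + 1), corankProb q (2 * k) (2 * b) * x ^ (2 * b) *
        (f (2 * b) + q ^ (2 * b + 1) * x * (f (2 * b + 1) / (1 - q ^ (2 * b + 1)))) := by
  have hk := one_sub_pow_succ_ne_zero hq (2 * k)
  rw [div_eq_iff hk, sum_mul, hf (2 * k + 1), show 2 * k + 1 + 1 = 2 * (k + 1) by ring,
    sum_range_two_mul]
  refine sum_congr rfl fun b hb ↦ ?_
  obtain ⟨d, rfl⟩ := Nat.exists_eq_add_of_le (Nat.lt_succ_iff.1 (mem_range.1 hb))
  have hc₀ := corankProb_succ_of_even q (2 * b) d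
  have hc₁ := corankProb_succ_succ hq (2 * (b + d)) (2 * b)
  have hb := one_sub_pow_succ_ne_zero hq (2 * b)
  rw [← mul_add] at hc₀
  rw [hc₀, eq_div_of_mul_eq hb hc₁]
  field_simp
  ring

theorem even_relation_of_corank_expansion (hq : ¬IsOfFinOrder q)
    (hx : ∀ k, (q ^ (k + 1) * x) ^ (2 * k + 1) ≠ 1)
    (hf : ∀ m, f m = ∑ r ∈ range (m + 1), corankProb q m r * x ^ r * f r) (k : ℕ) :
    f (2 * k) = (1 - q ^ (2 * k + 1) * x) / (1 - q ^ (2 * k + 1)) * f (2 * k + 1) := by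
  let e (b : ℕ) : K :=
    f (2 * b) - (1 - q ^ (2 * b + 1) * x) * (f (2 * b + 1) / (1 - q ^ (2 * b + 1)))
  have he (k : ℕ) : e k = q ^ (2 * k + 1) * x *
      ∑ b ∈ range (k + 1), corankProb q (2 * k) (2 * b) * x ^ (2 * b) * e b := by
    dsimp only [e]
    rw [sub_mul, one_mul, mul_assoc]
    nth_rw 1 [even_eq_sum_corankProb hq hf k]
    rw [odd_div_eq_sum_corankProb hq hf k]
    simp only [mul_sum, ← sum_sub_distrib]
    exact sum_congr rfl fun b _ ↦ by ring
  have he_zero : e k = 0 := by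
    induction k using Nat.strong_induction_on with
    | _ k ih =>
      have hfix : e k = (q ^ (k + 1) * x) ^ (2 * k + 1) * e k := by
        have hchoose : (2 * k + 1).choose 2 = k * (2 * k + 1) := by
          rw [Nat.choose_two_right, Nat.add_sub_cancel, mul_comm, mul_assoc,
            Nat.mul_div_cancel_left _ two_pos]
        nth_rw 1 [he k]
        rw [sum_range_succ, sum_eq_zero fun b hb ↦ by rw [ih b (mem_range.1 hb), mul_zero],
          corankProb_self hq, hchoose]
        ring
      refine (mul_eq_zero.1 ?_).resolve_left (sub_ne_zero.2 (hx k))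
      rw [sub_mul, one_mul, ← hfix, sub_self]
  rw [div_mul_eq_mul_div, mul_div_assoc]
  exact sub_eq_zero.1 he_zero

end CorankExpansion

end CorankDistribution

section Proportion

variable {α β : Type*}

/-- The proportion of elements of a finite type that satisfy `P`. -/
noncomputable def proportion (P : α → Prop) : ℝ :=
  Nat.card {a // P a} / Nat.card α

lemma proportion_nonneg (P : α → Prop) : 0 ≤ proportion P :=
  div_nonneg (Nat.cast_nonneg _) (Nat.cast_nonneg _)

lemma proportion_le_one [Finite α] (P : α → Prop) : proportion P ≤ 1 :=
  div_le_one_of_le₀ (Nat.cast_le.2 (Finite.card_subtype_le P)) (Nat.cast_nonneg _)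

lemma proportion_comp_equiv (e : α ≃ β) (P : β → Prop) :
    proportion (fun a ↦ P (e a)) = proportion P := by
  rw [proportion, proportion, Nat.card_congr e,
    Nat.card_congr (e.subtypeEquiv (q := P) fun _ ↦ Iff.rfl)]

lemma proportion_prod_eq_expect [Finite β] (s : Finset α) (P : α → β → Prop) :
    proportion (fun z : s × β ↦ P z.1 z.2) = 𝔼 a ∈ s, proportion (P a) := by
  rw [expect_eq_sum_div_card, proportion, Nat.card_prod, Nat.card_eq_finsetCard,
    Nat.card_congr (Equiv.subtypeProdEquivSigmaSubtype fun (a : s) b ↦ P a b), Nat.card_sigma,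
    sum_coe_sort s fun a ↦ Nat.card {b // P a b}]
  simp only [proportion]
  rw [← sum_div, div_div, Nat.cast_sum, Nat.cast_mul, mul_comm (#s : ℝ)]

variable {G H : Type*} [AddGroup G] [AddGroup H]

lemma card_subtype_comp_of_surjective {φ : G →+ H} (hφ : Function.Surjective φ) (P : H → Prop) :
    Nat.card {a // P (φ a)} = Nat.card φ.ker * Nat.card {b // P b} := by
  have e : {c : G ⧸ φ.ker // P (QuotientAddGroup.kerLift φ c)} ≃ {b // P b} :=
    (QuotientAddGroup.quotientKerEquivOfSurjective φ hφ).toEquiv.subtypeEquiv fun _ ↦ Iff.rfl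
  rw [← Nat.card_congr e, ← Nat.card_prod]
  exact Nat.card_congr (QuotientAddGroup.preimageMkEquivAddSubgroupProdSet φ.ker
    {c | P (QuotientAddGroup.kerLift φ c)})

lemma proportion_comp_of_surjective [Finite G] {φ : G →+ H} (hφ : Function.Surjective φ)
    (P : H → Prop) : proportion (fun a ↦ P (φ a)) = proportion P := by
  have hcard : Nat.card G = Nat.card φ.ker * Nat.card H := by
    simpa only [Nat.card_congr (Equiv.subtypeUnivEquiv fun _ ↦ trivial)] using
      card_subtype_comp_of_surjective hφ fun _ ↦ True
  have hker : (Nat.card φ.ker : ℝ) ≠ 0 := Nat.cast_ne_zero.2 Nat.card_pos.ne'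
  rw [proportion, proportion, card_subtype_comp_of_surjective hφ, hcard, Nat.cast_mul,
    Nat.cast_mul, mul_div_mul_left _ _ hker]

end Proportion

lemma expect_eq_of_eq_const_off_subset {α K : Type*} [Field K] [CharZero K] {s t : Finset α}
    {f : α → K} {q y : K} (hs : s.Nonempty) (hts : t ⊆ s) (hcard : (#t : K) = q * #s)
    (hf : ∀ a ∈ s, a ∉ t → f a = y) :
    𝔼 a ∈ s, f a = (1 - q) * y + q * 𝔼 a ∈ t, f a := by
  classical
  have hs' : (#s : K) ≠ 0 := Nat.cast_ne_zero.2 hs.card_pos.ne'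
  have hsdiff : ∑ a ∈ s \ t, f a = (#s - #t) * y := by
    rw [sum_congr rfl fun a ha ↦ hf a (mem_sdiff.1 ha).1 (mem_sdiff.1 ha).2, sum_const,
      nsmul_eq_mul, cast_card_sdiff hts]
  have ht : ∑ a ∈ t, f a = #t * 𝔼 a ∈ t, f a := by
    rw [← card_smul_expect, nsmul_eq_mul]
  rw [expect_eq_sum_div_card, ← sum_sdiff hts, hsdiff, ht, hcard]
  field_simp

section SymMat

variable {R ι κ : Type*} [CommRing R]

/-- The symmetric matrices whose `i`-th row (and hence `i`-th column) lies in the ideal `L i`. -/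
def symMat (L : ι → Ideal R) : AddSubgroup (Matrix ι ι R) where
  carrier := {S | S.IsSymm ∧ ∀ i k, S i k ∈ L i}
  zero_mem' := ⟨Matrix.isSymm_zero, fun i _ ↦ (L i).zero_mem⟩
  add_mem' hA hB := ⟨hA.1.add hB.1, fun i k ↦ (L i).add_mem (hA.2 i k) (hB.2 i k)⟩
  neg_mem' hA := ⟨hA.1.neg, fun i k ↦ (L i).neg_mem (hA.2 i k)⟩

lemma mem_symMat {L : ι → Ideal R} {S : Matrix ι ι R} :
    S ∈ symMat L ↔ S.IsSymm ∧ ∀ i k, S i k ∈ L i :=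
  Iff.rfl

/-- Reindexing of symmetric matrices along `e : κ ≃ ι`. -/
def symMatReindex (e : κ ≃ ι) (L : ι → Ideal R) : symMat (fun k ↦ L (e k)) ≃ symMat L :=
  (Matrix.reindex e e).subtypeEquiv fun S ↦ by
    rw [mem_symMat, mem_symMat, ← e.forall_congr_right]
    refine and_congr ⟨fun h ↦ h.reindex e, fun h ↦ ?_⟩ (forall_congr' fun i ↦ ?_)
    · simpa only [Matrix.reindex_apply, Matrix.submatrix_submatrix, Equiv.symm_comp_self,
        Matrix.submatrix_id_id] using h.submatrix e
    · rw [← e.forall_congr_right]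
      simp only [Matrix.reindex_apply, Matrix.submatrix_apply, Equiv.symm_apply_apply]

/-- The matrix with first row `(b, c)`, first column its transpose, and remaining block `D`, where
the border `(b, c)` is passed as one pair. -/
abbrev bordered (z : R × (ι → R)) (D : Matrix ι ι R) : Matrix (Unit ⊕ ι) (Unit ⊕ ι) R :=
  Matrix.fromBlocks (Matrix.of fun _ _ ↦ z.1) (Matrix.replicateRow Unit z.2)
    (Matrix.replicateRow Unit z.2).transpose D

lemma bordered_toBlocks₂₂ {R ι : Type*} {S : Matrix (Unit ⊕ ι) (Unit ⊕ ι) R}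
    (hS : S.IsSymm) :
    bordered (S (.inl ()) (.inl ()), fun i ↦ S (.inl ()) (.inr i)) S.toBlocks₂₂ = S := by
  ext (_ | i) (_ | k)
  exacts [rfl, rfl, hS.apply _ _, rfl]

variable [Finite R] [Finite ι]

/-- The borders `(b, c)` with `b ∈ K` and `c i ∈ M i`. -/
noncomputable def borders (K : Ideal R) (M : ι → Ideal R) : Finset (R × (ι → R)) :=
  (Set.toFinite ((K : Set R) ×ˢ Set.univ.pi fun i ↦ (M i : Set R))).toFinset

lemma mem_borders {K : Ideal R} {M : ι → Ideal R} {z : R × (ι → R)} :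
    z ∈ borders K M ↔ z.1 ∈ K ∧ ∀ i, z.2 i ∈ M i := by
  rw [borders, Set.Finite.mem_toFinset, Set.mem_prod, Set.mem_univ_pi]
  rfl

lemma borders_nonempty (K : Ideal R) (M : ι → Ideal R) : (borders K M).Nonempty :=
  ⟨0, mem_borders.2 ⟨K.zero_mem, fun i ↦ (M i).zero_mem⟩⟩

lemma card_borders {ι : Type*} [Fintype ι] (K : Ideal R) (M : ι → Ideal R) :
    #(borders K M) = Nat.card K * ∏ i, Nat.card (M i) := by
  rw [borders, ← Set.ncard_eq_toFinset_card, Set.ncard_prod, ← Nat.card_coe_set_eq,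
    ← Nat.card_coe_set_eq, Nat.card_congr (Equiv.Set.univPi _), Nat.card_pi]
  rfl

lemma bordered_mem_symMat_iff {K : Ideal R} {L : ι → Ideal R} {z : R × (ι → R)}
    {D : Matrix ι ι R} : bordered z D ∈ symMat (Sum.elim (fun _ ↦ K) L) ↔
      z ∈ borders K (fun i ↦ K ⊓ L i) ∧ D ∈ symMat L := by
  simp only [mem_symMat, mem_borders, Matrix.isSymm_fromBlocks_iff, Sum.forall, Sum.elim_inl,
    Sum.elim_inr, Matrix.fromBlocks_apply₁₁, Matrix.fromBlocks_apply₁₂,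
    Matrix.fromBlocks_apply₂₁, Matrix.fromBlocks_apply₂₂, Matrix.of_apply,
    Matrix.replicateRow_apply, Matrix.transpose_apply, Matrix.transpose_transpose, forall_const,
    Submodule.mem_inf, forall_and, true_and]
  have hb : (Matrix.of fun _ _ : Unit ↦ z.1).IsSymm := rfl
  tauto

/-- Splitting off the first row and column of a symmetric matrix. -/
noncomputable def borderEquiv (K : Ideal R) (L : ι → Ideal R) :
    borders K (fun i ↦ K ⊓ L i) × symMat L ≃ symMat (Sum.elim (fun _ : Unit ↦ K) L) where
  toFun z := ⟨bordered z.1.1 z.2.1, bordered_mem_symMat_iff.2 ⟨z.1.2, z.2.2⟩⟩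
  invFun S :=
    have hS := bordered_mem_symMat_iff.1 ((bordered_toBlocks₂₂ S.2.1).symm ▸ S.2)
    (⟨_, hS.1⟩, ⟨_, hS.2⟩)
  left_inv _ := rfl
  right_inv S := Subtype.ext (bordered_toBlocks₂₂ S.2.1)

lemma proportion_symMat_eq_expect_borders (K : Ideal R) (L : ι → Ideal R)
    (P : Matrix (Unit ⊕ ι) (Unit ⊕ ι) R → Prop) :
    proportion (fun S : symMat (Sum.elim (fun _ : Unit ↦ K) L) ↦ P S) =
      𝔼 z ∈ borders K (fun i ↦ K ⊓ L i), proportion fun D : symMat L ↦ P (bordered z D) := by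
  rw [← proportion_prod_eq_expect, ← proportion_comp_equiv (borderEquiv K L)]
  rfl

end SymMat

section SymDens

variable {R ι κ : Type*} [CommRing R] [Fintype ι] [DecidableEq ι] [Fintype κ] [DecidableEq κ]

/-- The proportion of matrices in `symMat L` with nonzero determinant. -/
noncomputable def symDens (L : ι → Ideal R) : ℝ :=
  proportion fun S : symMat L ↦ S.1.det ≠ 0

lemma symDens_comp_equiv (e : κ ≃ ι) (L : ι → Ideal R) :
    symDens (fun k ↦ L (e k)) = symDens L := by
  rw [symDens, symDens, ← proportion_comp_equiv (symMatReindex e L)]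
  simp only [symMatReindex, Equiv.subtypeEquiv_apply, Matrix.det_reindex_self]

lemma proportion_det_bordered_comp_equiv (e : κ ≃ ι) (L : ι → Ideal R) (b : R) (c : ι → R) :
    proportion (fun D : symMat (fun k ↦ L (e k)) ↦ (bordered (b, fun k ↦ c (e k)) D.1).det ≠ 0) =
      proportion fun D : symMat L ↦ (bordered (b, c) D.1).det ≠ 0 := by
  rw [← proportion_comp_equiv (symMatReindex e L)]
  congr! 3 with D
  rw [← Matrix.det_reindex_self (Equiv.sumCongr (Equiv.refl Unit) e)]
  congr 1
  ext (_ | i) (_ | k) <;>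
    simp [symMatReindex]

lemma proportion_det_fromBlocks_of_isUnit {A : Matrix κ κ R} (hA : A.IsSymm) (hdet : IsUnit A.det)
    {L : ι → Ideal R} {C : Matrix κ ι R} (hC : ∀ a i, C a i ∈ L i) :
    proportion (fun D : symMat L ↦ (Matrix.fromBlocks A C C.transpose D).det ≠ 0) =
      symDens L := by
  have hmem : C.transpose * A⁻¹ * C ∈ symMat L := by
    refine mem_symMat.2 ⟨?_, fun i k ↦ ?_⟩
    · rw [Matrix.IsSymm, Matrix.transpose_mul, Matrix.transpose_mul, Matrix.transpose_transpose,
        hA.inv.eq, Matrix.mul_assoc]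
    · rw [Matrix.mul_assoc, Matrix.mul_apply]
      exact (L i).sum_mem fun a _ ↦ (L i).mul_mem_right _ (hC a i)
  rw [symDens, ← proportion_comp_equiv (Equiv.subRight (⟨_, hmem⟩ : symMat L))
    fun S : symMat L ↦ S.1.det ≠ 0]
  congr! 2 with D
  let _ := A.invertibleOfIsUnitDet hdet
  rw [Matrix.det_fromBlocks₁₁, Matrix.invOf_eq_nonsing_inv, ne_eq, ne_eq, hdet.mul_right_eq_zero]
  rfl

lemma proportion_det_bordered_of_isUnit_corner {L : ι → Ideal R} {b : R} (hb : IsUnit b)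
    {c : ι → R} (hc : ∀ i, c i ∈ L i) :
    proportion (fun D : symMat L ↦ (bordered (b, c) D.1).det ≠ 0) = symDens L :=
  proportion_det_fromBlocks_of_isUnit (Matrix.IsSymm.ext fun _ _ ↦ rfl)
    (by rwa [Matrix.det_unique]) fun _ ↦ hc

section LocalRing

variable [IsLocalRing R]

local notation "𝔪" => IsLocalRing.maximalIdeal R

lemma isUnit_mul_sub_sq {b c : R} (hb : b ∈ 𝔪) (hc : IsUnit c) (d : R) :
    IsUnit (b * d - c * c) := by
  rw [← IsLocalRing.notMem_maximalIdeal,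
    Submodule.sub_mem_iff_right _ (Ideal.mul_mem_right d _ hb)]
  exact IsLocalRing.notMem_maximalIdeal.2 (hc.mul hc)

/-- Levels for symmetric matrices whose first `j` rows and columns lie in the maximal ideal and
whose remaining `m × m` block is unrestricted. -/
def blockLevels (R : Type*) [CommRing R] [IsLocalRing R] (j m : ℕ) : Fin j ⊕ Fin m → Ideal R :=
  Sum.elim (fun _ ↦ IsLocalRing.maximalIdeal R) fun _ ↦ ⊤

/-- The density of nonzero determinants among the symmetric matrices with levels
`blockLevels R j m`. -/
noncomputable def blockDens (R : Type*) [CommRing R] [IsLocalRing R] (j m : ℕ) : ℝ :=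
  symDens (blockLevels R j m)

/-- The reindexing that moves the `k`-th unrestricted index to the front. -/
def pivotEquiv (j : ℕ) {m : ℕ} (k : Fin (m + 1)) :
    Unit ⊕ (Fin j ⊕ Fin m) ≃ Fin j ⊕ Fin (m + 1) :=
  (Equiv.sumAssoc _ _ _).symm.trans <|
    ((Equiv.sumComm _ _).sumCongr (Equiv.refl _)).trans <|
      (Equiv.sumAssoc _ _ _).trans <|
        (Equiv.refl _).sumCongr <|
          (Equiv.sumComm _ _).trans <|
            (Equiv.optionEquivSumPUnit _).symm.trans (finSuccEquiv' k).symm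

lemma pivotEquiv_inl (j : ℕ) {m : ℕ} (k : Fin (m + 1)) : pivotEquiv j k (.inl ()) = .inr k := by
  simp [pivotEquiv]

lemma blockLevels_comp_pivotEquiv (j : ℕ) {m : ℕ} (k : Fin (m + 1)) :
    (fun i ↦ blockLevels R j (m + 1) (pivotEquiv j k i)) =
      Sum.elim (fun _ ↦ ⊤) (blockLevels R j m) := by
  ext (_ | _ | _) : 1 <;> rfl

lemma blockDens_succ_right (j m : ℕ) :
    blockDens R j (m + 1) = symDens (Sum.elim (fun _ : Unit ↦ ⊤) (blockLevels R j m)) := by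
  rw [blockDens, ← symDens_comp_equiv (pivotEquiv j 0), blockLevels_comp_pivotEquiv]

variable [Finite R]

lemma proportion_det_bordered_of_isUnit_head {L : ι → Ideal R} {b : R} (hb : b ∈ 𝔪)
    {c : Unit ⊕ ι → R} (hc : IsUnit (c (.inl ()))) (hcL : ∀ i, c (.inr i) ∈ L i) :
    proportion (fun D : symMat (Sum.elim (fun _ : Unit ↦ ⊤) L) ↦ (bordered (b, c) D.1).det ≠ 0) =
      symDens L := by
  rw [proportion_symMat_eq_expect_borders ⊤ L fun S ↦ (bordered (b, c) S).det ≠ 0]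
  suffices h : ∀ z ∈ borders ⊤ fun i ↦ ⊤ ⊓ L i,
      proportion (fun D : symMat L ↦ (bordered (b, c) (bordered z D.1)).det ≠ 0) = symDens L by
    rw [expect_congr rfl h, expect_const (borders_nonempty _ _)]
  intro z hz
  let A : Matrix (Fin 2) (Fin 2) R := !![b, c (.inl ()); c (.inl ()), z.1]
  let C : Matrix (Fin 2) ι R := Matrix.of ![fun i ↦ c (.inr i), z.2]
  let e : Unit ⊕ (Unit ⊕ ι) ≃ Fin 2 ⊕ ι :=
    (Equiv.sumAssoc _ _ _).symm.trans
      ((Equiv.boolEquivPUnitSumPUnit.symm.trans finTwoEquiv.symm).sumCongr (Equiv.refl ι))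
  have hA : A.IsSymm := Matrix.IsSymm.ext fun i k ↦ by fin_cases i <;> fin_cases k <;> rfl
  have hdet : IsUnit A.det := by
    rw [Matrix.det_fin_two_of]
    exact isUnit_mul_sub_sq hb hc z.1
  have hC (a : Fin 2) (i : ι) : C a i ∈ L i := by
    fin_cases a
    exacts [hcL i, ((mem_borders.1 hz).2 i).2]
  rw [← proportion_det_fromBlocks_of_isUnit hA hdet hC]
  congr! 3 with D
  rw [← Matrix.det_submatrix_equiv_self e]
  congr 1
  ext (_ | _ | i) (_ | _ | k) <;> rfl

lemma symDens_top_eq {q : ℝ} (hq : (Nat.card 𝔪 : ℝ) = q * Nat.card R) (L : ι → Ideal R) :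
    symDens (Sum.elim (fun _ : Unit ↦ ⊤) L) = (1 - q) * symDens L +
      q * 𝔼 z ∈ borders 𝔪 L, proportion fun D : symMat L ↦ (bordered z D.1).det ≠ 0 := by
  rw [symDens, proportion_symMat_eq_expect_borders ⊤ L fun S ↦ S.det ≠ 0]
  simp only [top_inf_eq]
  refine expect_eq_of_eq_const_off_subset (borders_nonempty _ _)
    (fun z hz ↦ ?_) ?_ fun z hz hz' ↦ ?_
  · exact mem_borders.2 ⟨Submodule.mem_top, (mem_borders.1 hz).2⟩
  · rw [card_borders, card_borders, Nat.cast_mul, hq, Nat.cast_mul, ← mul_assoc]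
    congr 3
    exact (Nat.card_congr (Equiv.Set.univ R)).symm
  · rw [mem_borders] at hz hz'
    exact proportion_det_bordered_of_isUnit_corner
      (IsLocalRing.notMem_maximalIdeal.1 fun h ↦ hz' ⟨h, hz.2⟩) hz.2

lemma blockDens_succ_left (j m : ℕ) :
    blockDens R (j + 1) m =
      𝔼 z ∈ borders 𝔪 (fun i ↦ 𝔪 ⊓ blockLevels R j m i),
        proportion fun D : symMat (blockLevels R j m) ↦ (bordered z D.1).det ≠ 0 := by
  let e : Unit ⊕ (Fin j ⊕ Fin m) ≃ Fin (j + 1) ⊕ Fin m :=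
    (Equiv.sumAssoc _ _ _).symm.trans <|
      ((Equiv.sumComm _ _).trans <|
        (Equiv.optionEquivSumPUnit _).symm.trans (finSuccEquiv j).symm).sumCongr (Equiv.refl _)
  have he : (fun i ↦ blockLevels R (j + 1) m (e i)) =
      Sum.elim (fun _ ↦ 𝔪) (blockLevels R j m) := by
    ext (_ | _ | _) : 1 <;> rfl
  rw [blockDens, ← symDens_comp_equiv e, he, symDens,
    proportion_symMat_eq_expect_borders 𝔪 _ fun S ↦ S.det ≠ 0]

lemma proportion_det_bordered_blockLevels {j m : ℕ} {b : R} (hb : b ∈ 𝔪)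
    {c : Fin j ⊕ Fin (m + 1) → R} (hc : ∀ i, c i ∈ blockLevels R j (m + 1) i) {k : Fin (m + 1)}
    (hk : IsUnit (c (.inr k))) :
    proportion (fun D : symMat (blockLevels R j (m + 1)) ↦ (bordered (b, c) D.1).det ≠ 0) =
      blockDens R j m := by
  have hlevels := blockLevels_comp_pivotEquiv (R := R) j k
  have hc' (i) : c (pivotEquiv j k (.inr i)) ∈ blockLevels R j m i :=
    (congr_fun hlevels (.inr i)).le (hc _)
  rw [← pivotEquiv_inl j k] at hk
  rw [← proportion_det_bordered_comp_equiv (pivotEquiv j k), hlevels]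
  exact proportion_det_bordered_of_isUnit_head hb hk hc'

lemma expect_borders_blockLevels {q : ℝ} (hq : (Nat.card 𝔪 : ℝ) = q * Nat.card R) (j m : ℕ) :
    (𝔼 z ∈ borders 𝔪 (blockLevels R j m),
      proportion fun D : symMat (blockLevels R j m) ↦ (bordered z D.1).det ≠ 0) =
        (1 - q ^ m) * blockDens R j (m - 1) + q ^ m * blockDens R (j + 1) m := by
  rw [blockDens_succ_left]
  refine expect_eq_of_eq_const_off_subset (borders_nonempty _ _)
    (fun z hz ↦ ?_) ?_ fun z hz hz' ↦ ?_
  · rw [mem_borders] at hz ⊢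
    exact ⟨hz.1, fun i ↦ (hz.2 i).2⟩
  · have htop : Nat.card (⊤ : Ideal R) = Nat.card R := Nat.card_congr (Equiv.Set.univ R)
    simp only [card_borders, Fintype.prod_sum_type, blockLevels, Sum.elim_inl, Sum.elim_inr,
      inf_top_eq, inf_idem, prod_const, card_univ, Fintype.card_fin, htop]
    push_cast
    rw [hq]
    ring
  · rw [mem_borders] at hz hz'
    obtain ⟨i, hi⟩ : ∃ i, z.2 i ∉ 𝔪 := by
      by_contra! h
      exact hz' ⟨hz.1, fun i ↦ ⟨h i, hz.2 i⟩⟩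
    obtain i | k := i
    · exact absurd (hz.2 (.inl i)) hi
    · obtain _ | m := m
      · exact k.elim0
      · exact proportion_det_bordered_blockLevels hz.1 hz.2 (IsLocalRing.notMem_maximalIdeal.1 hi)

-- For `m = 0` the truncated `m - 1` is harmless, since its coefficient vanishes.
theorem blockDens_succ {q : ℝ} (hq : (Nat.card 𝔪 : ℝ) = q * Nat.card R) (j m : ℕ) :
    blockDens R j (m + 1) = (1 - q) * blockDens R j m + q * (1 - q ^ m) * blockDens R j (m - 1) +
      q ^ (m + 1) * blockDens R (j + 1) m := by
  rw [blockDens_succ_right, symDens_top_eq hq, expect_borders_blockLevels hq, ← blockDens]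
  ring

theorem blockDens_eq_sum_corankProb {q : ℝ} (hq : ¬IsOfFinOrder q)
    (hqR : (Nat.card 𝔪 : ℝ) = q * Nat.card R) (j m : ℕ) :
    blockDens R j m = ∑ r ∈ range (m + 1), corankProb q m r * blockDens R (j + r) 0 :=
  eq_sum_corankProb_mul_of_recursion hq (blockDens_succ hqR) j m

end LocalRing

end SymDens

lemma symDens_const_eq_proportion {R S ι : Type*} [CommRing R] [Finite R] [CommRing S] [Fintype ι]
    [DecidableEq ι] (φ : R →+ S) {K : Ideal S} (hφ : ∀ b, b ∈ K ↔ ∃ a, φ a = b) :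
    symDens (fun _ : ι ↦ K) =
      proportion fun A : symMat (fun _ : ι ↦ (⊤ : Ideal R)) ↦ (A.1.map φ).det ≠ 0 := by
  let Φ : symMat (fun _ : ι ↦ (⊤ : Ideal R)) →+ symMat fun _ : ι ↦ K :=
    (φ.mapMatrix.comp (AddSubgroup.subtype _)).codRestrict _ fun A ↦
      ⟨A.2.1.map φ, fun i k ↦ (hφ _).2 ⟨A.1 i k, rfl⟩⟩
  have hΦ : Function.Surjective Φ := by
    rintro ⟨S, hS, hSK⟩
    refine ⟨⟨S.map (Function.invFun φ), hS.map _, fun _ _ ↦ Submodule.mem_top⟩, Subtype.ext ?_⟩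
    ext i k
    exact Function.invFun_eq ((hφ _).1 (hSK i k))
  exact (proportion_comp_of_surjective hΦ _).symm

lemma card_symMat_top (R ι : Type*) [CommRing R] [Finite ι] :
    Nat.card (symMat fun _ : ι ↦ (⊤ : Ideal R)) = Nat.card R ^ (Nat.card ι + 1).choose 2 := by
  have := Fintype.ofFinite ι
  have e : symMat (fun _ : ι ↦ (⊤ : Ideal R)) ≃ {S : ι → ι → R // ∀ i k, S i k = S k i} :=
    Equiv.subtypeEquivRight fun S ↦ by
      simp only [mem_symMat, Submodule.mem_top, implies_true, and_true, Matrix.IsSymm.ext_iff]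
      exact forall_comm
  rw [Nat.card_congr (e.trans Sym2.lift), Nat.card_fun, Nat.card_eq_fintype_card (α := Sym2 ι),
    Sym2.card, Nat.card_eq_fintype_card (α := ι)]

lemma Psym_eq_symDens (n m : ℕ) : Psym n m = symDens fun _ : Fin n ↦ (⊤ : Ideal (ZMod m)) := by
  have e : {S : symMat (fun _ : Fin n ↦ (⊤ : Ideal (ZMod m))) // S.1.det ≠ 0} ≃
      {A : Matrix (Fin n) (Fin n) (ZMod m) // A.IsSymm ∧ A.det ≠ 0} :=
    (Equiv.subtypeSubtypeEquivSubtypeInter (· ∈ symMat _) fun A : Matrix _ _ _ ↦ A.det ≠ 0).trans <|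
      Equiv.subtypeEquivRight fun A ↦ by
        simp only [mem_symMat, Submodule.mem_top, implies_true, and_true]
  rw [Psym, Nsym, symDens, proportion, Nat.card_congr e, card_symMat_top, Nat.card_zmod,
    Nat.card_fin, Nat.choose_two_right, Nat.add_sub_cancel, mul_comm (n + 1), Nat.cast_pow]

lemma Psym_one (n : ℕ) : Psym n 1 = 0 := by
  have : Subsingleton (ZMod 1) := inferInstanceAs (Subsingleton (Fin 1))
  have : IsEmpty {A : Matrix (Fin n) (Fin n) (ZMod 1) // A.IsSymm ∧ A.det ≠ 0} :=
    ⟨fun A ↦ A.2.2 (Subsingleton.elim _ _)⟩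
  rw [Psym, Nsym, Nat.card_of_isEmpty, Nat.cast_zero, zero_div]

lemma abs_Psym_le_one (n m : ℕ) [NeZero m] : |Psym n m| ≤ 1 := by
  rw [Psym_eq_symDens, symDens, abs_of_nonneg (proportion_nonneg _)]
  exact proportion_le_one _

section PrimePower

variable (p μ : ℕ) [Fact p.Prime]

lemma castHom_eq_zero_iff (j : ℕ) (a : ZMod (p ^ μ)) :
    ZMod.castHom (pow_dvd_pow p (Nat.sub_le μ j)) (ZMod (p ^ (μ - j))) a = 0 ↔
      (p : ZMod (p ^ μ)) ^ j * a = 0 := by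
  obtain ⟨n, rfl⟩ := ZMod.natCast_zmod_surjective a
  rw [map_natCast, ZMod.natCast_eq_zero_iff, ← Nat.cast_pow, ← Nat.cast_mul,
    ZMod.natCast_eq_zero_iff]
  obtain hj | hj := le_total j μ
  · obtain ⟨ν, rfl⟩ := Nat.exists_eq_add_of_le hj
    rw [Nat.add_sub_cancel_left, pow_add,
      Nat.mul_dvd_mul_iff_left (pow_pos (Fact.out : p.Prime).pos j)]
  · rw [Nat.sub_eq_zero_of_le hj, pow_zero]
    exact iff_of_true (one_dvd n) ((pow_dvd_pow p hj).mul_right n)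

variable [NeZero μ]

instance isLocalHom_castHom :
    IsLocalHom (ZMod.castHom (dvd_pow_self p (NeZero.ne μ)) (ZMod p)) where
  map_nonunit a ha := by
    have hp : p.Prime := Fact.out
    obtain ⟨n, rfl⟩ := ZMod.natCast_zmod_surjective a
    rw [map_natCast, ZMod.isUnit_iff_coprime, Nat.coprime_comm, hp.coprime_iff_not_dvd] at ha
    exact (ZMod.isUnit_natCast_iff_not_dvd_pow hp (NeZero.pos μ)).2 ha

instance isLocalRing_zmod_prime_pow : IsLocalRing (ZMod (p ^ μ)) :=
  (ZMod.castHom (dvd_pow_self p (NeZero.ne μ)) (ZMod p)).domain_isLocalRing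

lemma mem_maximalIdeal_zmod_iff (b : ZMod (p ^ μ)) :
    b ∈ IsLocalRing.maximalIdeal (ZMod (p ^ μ)) ↔ ∃ a, (p : ZMod (p ^ μ)) * a = b := by
  have hp : p.Prime := Fact.out
  rw [IsLocalRing.mem_maximalIdeal, mem_nonunits_iff]
  refine ⟨fun hb ↦ ?_, ?_⟩
  · obtain ⟨n, rfl⟩ := ZMod.natCast_zmod_surjective b
    rw [ZMod.isUnit_natCast_iff_not_dvd_pow hp (NeZero.pos μ), not_not] at hb
    obtain ⟨m, rfl⟩ := hb
    exact ⟨m, (Nat.cast_mul p m).symm⟩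
  · rintro ⟨a, rfl⟩ h
    exact ZMod.prime_natCast_not_isUnit_pow hp (NeZero.pos μ) (isUnit_of_mul_isUnit_left h)

lemma card_maximalIdeal_zmod :
    (Nat.card (IsLocalRing.maximalIdeal (ZMod (p ^ μ))) : ℝ) = 1 / p * Nat.card (ZMod (p ^ μ)) := by
  let φ := ZMod.castHom (dvd_pow_self p (NeZero.ne μ)) (ZMod p)
  have hφ : Function.Surjective φ := ZMod.castHom_surjective _
  have hcard := card_subtype_comp_of_surjective (φ := φ.toAddMonoidHom) hφ fun _ ↦ True
  rw [Nat.card_congr (Equiv.subtypeUnivEquiv fun _ ↦ trivial),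
    Nat.card_congr (Equiv.subtypeUnivEquiv fun _ ↦ trivial), Nat.card_zmod p] at hcard
  have hp : (p : ℝ) ≠ 0 := Nat.cast_ne_zero.2 (Fact.out : p.Prime).ne_zero
  rw [hcard, ← IsLocalRing.ker_eq_maximalIdeal φ hφ, Nat.cast_mul, one_div,
    mul_comm (p : ℝ)⁻¹, mul_inv_cancel_right₀ hp]
  rfl

lemma blockDens_zmod_zero_left (m : ℕ) : blockDens (ZMod (p ^ μ)) 0 m = Psym m (p ^ μ) := by
  rw [Psym_eq_symDens, blockDens, ← symDens_comp_equiv (Equiv.emptySum (Fin 0) (Fin m)).symm]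
  rfl

lemma blockDens_zmod_zero_right (j : ℕ) :
    blockDens (ZMod (p ^ μ)) j 0 = Psym j (p ^ (μ - j)) := by
  let π := ZMod.castHom (pow_dvd_pow p (Nat.sub_le μ j)) (ZMod (p ^ (μ - j)))
  have hπ : Function.Surjective π := ZMod.castHom_surjective _
  rw [blockDens, ← symDens_comp_equiv (Equiv.sumEmpty (Fin j) (Fin 0)).symm, Psym_eq_symDens,
    symDens_const_eq_proportion π.toAddMonoidHom fun b ↦ iff_of_true Submodule.mem_top (hπ b)]
  refine (symDens_const_eq_proportion (AddMonoidHom.mulLeft (p : ZMod (p ^ μ)))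
    (mem_maximalIdeal_zmod_iff p μ)).trans ?_
  congr! 2 with A
  have hmul : A.1.map (AddMonoidHom.mulLeft (p : ZMod (p ^ μ))) = (p : ZMod (p ^ μ)) • A.1 := rfl
  have hmap : (A.1.map π.toAddMonoidHom).det = π A.1.det := (π.map_det A.1).symm
  rw [hmul, Matrix.det_smul, Fintype.card_fin, hmap, ne_eq, ne_eq, castHom_eq_zero_iff]

end PrimePower

section GeneratingFunction

lemma not_isOfFinOrder_of_norm_lt_one {K : Type*} [NormedDivisionRing K] {z : K} (hz : ‖z‖ < 1) :
    ¬IsOfFinOrder z :=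
  fun h ↦ hz.ne h.norm_eq_one

lemma norm_one_div_prime_lt_one (p : ℕ) [Fact p.Prime] : ‖(1 / p : ℝ)‖ < 1 := by
  rw [one_div, norm_inv, RCLike.norm_natCast]
  exact inv_lt_one_of_one_lt₀ (Nat.one_lt_cast.2 (Fact.out : p.Prime).one_lt)

-- When `μ ≤ r` the truncated exponent gives modulus `1`, where `Psym` vanishes.
theorem Psym_prime_pow_eq_sum (p m μ : ℕ) [Fact p.Prime] :
    Psym m (p ^ μ) =
      ∑ r ∈ range (m + 1), corankProb (1 / p : ℝ) m r * Psym r (p ^ (μ - r)) := by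
  obtain rfl | hμ := eq_or_ne μ 0
  · simp only [Nat.zero_sub, pow_zero, Psym_one, mul_zero, sum_const_zero]
  · have : NeZero μ := ⟨hμ⟩
    simp only [← blockDens_zmod_zero_left, ← blockDens_zmod_zero_right]
    have hq : ¬IsOfFinOrder (1 / p : ℝ) :=
      not_isOfFinOrder_of_norm_lt_one (norm_one_div_prime_lt_one p)
    rw [blockDens_eq_sum_corankProb hq (card_maximalIdeal_zmod p μ)]
    simp only [zero_add]

/-- The generating function `∑_{μ ≥ 1} P(n, p ^ μ) x ^ μ`. -/
noncomputable def PsymSeries (p : ℕ) (x : ℝ) (n : ℕ) : ℝ :=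
  ∑' μ : ℕ, Psym n (p ^ (μ + 1)) * x ^ (μ + 1)

lemma tsum_comp_sub_mul_pow {K : Type*} [DivisionRing K] [TopologicalSpace K]
    [IsTopologicalRing K] [T2Space K] {a : ℕ → K} (ha : a 0 = 0) (x : K) (r : ℕ) :
    ∑' μ, a (μ - r) * x ^ μ = (∑' μ, a (μ + 1) * x ^ (μ + 1)) * x ^ r := by
  rw [← tsum_mul_right, ← (add_left_injective (r + 1)).tsum_eq]
  · refine tsum_congr fun μ ↦ ?_
    rw [← add_assoc, Nat.add_right_comm, Nat.add_sub_cancel, pow_add x (μ + 1), mul_assoc]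
  · intro μ hμ
    have hr : r < μ := by
      by_contra! h
      exact hμ (by simp only [Nat.sub_eq_zero_of_le h, ha, zero_mul])
    exact ⟨μ - (r + 1), Nat.sub_add_cancel hr⟩

variable (p : ℕ) {x : ℝ}

lemma summable_Psym_mul_pow [NeZero p] (hx : |x| < 1) (n r : ℕ) :
    Summable fun μ ↦ Psym n (p ^ (μ - r)) * x ^ μ := by
  refine .of_norm_bounded (summable_geometric_of_lt_one (abs_nonneg x) hx) fun μ ↦ ?_
  rw [norm_mul, norm_pow, Real.norm_eq_abs, Real.norm_eq_abs]
  exact mul_le_of_le_one_left (pow_nonneg (abs_nonneg x) μ) (abs_Psym_le_one _ _)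

theorem PsymSeries_eq_sum [Fact p.Prime] (hx : |x| < 1) (m : ℕ) :
    PsymSeries p x m =
      ∑ r ∈ range (m + 1), corankProb (1 / p : ℝ) m r * x ^ r * PsymSeries p x r := by
  have hp : NeZero p := ⟨(Fact.out : p.Prime).ne_zero⟩
  have shift (n r : ℕ) : ∑' μ, Psym n (p ^ (μ - r)) * x ^ μ = PsymSeries p x n * x ^ r :=
    tsum_comp_sub_mul_pow (a := fun μ ↦ Psym n (p ^ μ)) (by rw [pow_zero, Psym_one]) x r
  calc PsymSeries p x m
    _ = ∑' μ, Psym m (p ^ μ) * x ^ μ := by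
      simpa only [Nat.sub_zero, pow_zero, mul_one] using (shift m 0).symm
    _ = ∑' μ, ∑ r ∈ range (m + 1),
          corankProb (1 / p : ℝ) m r * (Psym r (p ^ (μ - r)) * x ^ μ) := by
      simp only [Psym_prime_pow_eq_sum p m, sum_mul, mul_assoc]
    _ = ∑ r ∈ range (m + 1), corankProb (1 / p : ℝ) m r * (PsymSeries p x r * x ^ r) := by
      rw [Summable.tsum_finsetSum fun r _ ↦ (summable_Psym_mul_pow p hx r r).mul_left _]
      simp only [tsum_mul_left, shift]
    _ = _ := sum_congr rfl fun r _ ↦ by rw [mul_comm (PsymSeries p x r), mul_assoc]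

end GeneratingFunction

theorem Psym_generating_function_even (p : ℕ) (hp : p.Prime) (q : ℝ)
    (hq : q = 1 / p) (k : ℕ) (x : ℝ) (hx : |x| < 1) :
    ∑' μ : ℕ, Psym (2 * k) (p ^ (μ + 1)) * x ^ (μ + 1) =
      ((1 - q ^ (2 * k + 1) * x) / (1 - q ^ (2 * k + 1))) *
        ∑' μ : ℕ, Psym (2 * k + 1) (p ^ (μ + 1)) * x ^ (μ + 1) := by
  subst hq
  have : Fact p.Prime := ⟨hp⟩
  have hq := norm_one_div_prime_lt_one p
  refine even_relation_of_corank_expansion (f := PsymSeries p x)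
    (not_isOfFinOrder_of_norm_lt_one hq) (fun k h ↦ ?_) (PsymSeries_eq_sum p hx) k
  have hqx : ‖(1 / p : ℝ) ^ (k + 1) * x‖ < 1 := by
    rw [norm_mul, norm_pow]
    exact mul_lt_one_of_nonneg_of_lt_one_right
      (pow_le_one₀ (norm_nonneg _) hq.le) (norm_nonneg x) hx
  exact not_isOfFinOrder_of_norm_lt_one hqx
    (isOfFinOrder_iff_pow_eq_one.2 ⟨2 * k + 1, Nat.succ_pos _, h⟩)
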